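/- For every a ∈ ℂ \ ℝ_{≤0} and every b ∈ ℂ with Re(b) > 0, there exists C > 0 independent of N such that for every N ∈ ℕ, ε(N, a, b) ≤ C · exp(−2 Re√(2a(N+1))), where √· is the principal square root. -/

import Mathlib

open MeasureTheory Set
open scoped ENNReal

/-- The Laguerre polynomial `L_n(x) = ∑_{k=0}^n C(n, n-k) (-x)^k / k!`. -/
noncomputable def lagL (n : ℕ) (x : ℝ) : ℝ :=
  ∑ k ∈ Finset.range (n + 1), (n.choose (n - k) : ℝ) * (-x) ^ k / (Nat.factorial k : ℝ)

/-- The Laguerre function `φ_n(x) = e^{-x} L_n(2x)`. -/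
noncomputable def lagPhi (n : ℕ) (x : ℝ) : ℝ := Real.exp (-x) * lagL n (2 * x)

/-- The orthogonal projection in `L²((0,∞))` onto `span {φ_0, …, φ_N}`,
written out via the expansion coefficients `2⟨f, φ_n⟩`. -/
noncomputable def lagProj (N : ℕ) (f : ℝ → ℂ) (ξ : ℝ) : ℂ :=
  ∑ n ∈ Finset.range (N + 1),
    (2 * ∫ t in Ioi (0:ℝ), f t * (lagPhi n t : ℂ)) * (lagPhi n ξ : ℂ)

/-- `ε(N, a, b) = ‖(I - Π_N)[ξ ↦ (a+ξ)⁻¹ (Π_N e^{-b·})(ξ)]‖_{L²((0,∞))}`. -/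
noncomputable def lagEps (N : ℕ) (a b : ℂ) : ℝ≥0∞ :=
  eLpNorm (fun ξ : ℝ =>
      (a + (ξ:ℂ))⁻¹ * lagProj N (fun t => Complex.exp (-b * t)) ξ
        - lagProj N (fun ξ' => (a + (ξ':ℂ))⁻¹
            * lagProj N (fun t => Complex.exp (-b * t)) ξ') ξ) 2
    (volume.restrict (Ioi (0:ℝ)))

/-!
Since `Π_N e^{-b·}` is `P(ξ) e^{-ξ}` with `P` of degree at most `N`, dividing `P` by `a + ξ` gives
`(a + ξ)⁻¹ P(ξ) e^{-ξ} = Q(ξ) e^{-ξ} + P(-a) (a + ξ)⁻¹ e^{-ξ}` with `deg Q < N`, and `I - Π_N` kills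
the first summand. The numbers `P(-a)` are bounded in `N`, because the Laguerre coefficients of
`e^{-b·}` decay geometrically while `L_n(-2a)` grows subexponentially in `n`.

It remains to apply `I - Π_N` to `(a + ξ)⁻¹ e^{-ξ}`. With `a = μ² / 2` and `Re μ > 0`, this function
is the integral of `e^{-(a + ξ) (z - 1)} e^{-ξ}` along the contour `z = coth (r μ / 2)`, hence a
superposition of the exponentials `e^{-zξ}`. The coefficients of such an exponential in the Laguerre
basis form a geometric sequence of ratio `(z - 1) / (z + 1) = e^{-rμ}`, so its residual has norm
`e^{-r (N + 1) Re μ} / √(2 Re z)`. The weight along the contour is at most a constant times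
`√(2 Re z) r^{-3/2} e^{-Re μ (1/r + r/4)}`, so Minkowski's inequality reduces the estimate to the
inverse Gaussian integral `∫ r^{-3/2} e^{-p/r - qr} dr = √(π/p) e^{-2√(pq)}` with `p = Re μ` and
`q = (N + 5/4) Re μ`, where `2√(pq) ≥ 2√(N + 1) Re μ = 2 Re √(2a(N + 1))`.
-/

open Filter Polynomial
open scoped Topology InnerProductSpace

section ImproperIntegral

variable {X : Type*} [TopologicalSpace X]

lemma tendsto_update_atTop {f : ℝ → X} {a : ℝ} {e m : X} (hf : Tendsto f atTop (𝓝 m)) :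
    Tendsto (Function.update f a e) atTop (𝓝 m) :=
  hf.congr' <| by
    filter_upwards [eventually_ne_atTop a] with y hy using (Function.update_of_ne hy e f).symm

lemma continuousWithinAt_update_Ici {f : ℝ → X} {a : ℝ} {e : X} (hf : Tendsto f (𝓝[>] a) (𝓝 e)) :
    ContinuousWithinAt (Function.update f a e) (Ici a) a := by
  rwa [continuousWithinAt_update_same, Ici_sdiff_left]

variable {E : Type*} [NormedAddCommGroup E] [NormedSpace ℝ E]

lemma hasDerivAt_update_of_ne {f : ℝ → E} {f' e : E} {a x : ℝ} (hx : x ≠ a)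
    (hf : HasDerivAt f f' x) : HasDerivAt (Function.update f a e) f' x :=
  hf.congr_of_eventuallyEq <| by
    filter_upwards [eventually_ne_nhds hx] with y hy using Function.update_of_ne hy e f

lemma integral_Ioi_of_hasDerivAt_of_tendsto_nhdsGT [CompleteSpace E] {f f' : ℝ → E} {a : ℝ}
    {e m : E} (hderiv : ∀ x ∈ Ioi a, HasDerivAt f (f' x) x) (hintegrable : IntegrableOn f' (Ioi a))
    (hleft : Tendsto f (𝓝[>] a) (𝓝 e)) (htop : Tendsto f atTop (𝓝 m)) :
    ∫ x in Ioi a, f' x = m - e := by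
  simpa using integral_Ioi_of_hasDerivAt_of_tendsto (continuousWithinAt_update_Ici hleft)
    (fun x hx => hasDerivAt_update_of_ne (ne_of_gt hx) (hderiv x hx)) hintegrable
    (tendsto_update_atTop htop)

lemma integrableOn_Ioi_deriv_of_nonneg_of_tendsto_nhdsGT {g g' : ℝ → ℝ} {a e m : ℝ}
    (hderiv : ∀ x ∈ Ioi a, HasDerivAt g (g' x) x) (hnonneg : ∀ x ∈ Ioi a, 0 ≤ g' x)
    (hleft : Tendsto g (𝓝[>] a) (𝓝 e)) (htop : Tendsto g atTop (𝓝 m)) :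
    IntegrableOn g' (Ioi a) :=
  integrableOn_Ioi_deriv_of_nonneg (continuousWithinAt_update_Ici hleft)
    (fun x hx => hasDerivAt_update_of_ne (ne_of_gt hx) (hderiv x hx)) hnonneg
    (tendsto_update_atTop htop)

end ImproperIntegral

section InverseGaussian

/-- The Gaussian primitive `∫₀ˣ e^{-u²} du`, that is `√π / 2` times the error function. -/
noncomputable def gaussianPrimitive (x : ℝ) : ℝ := ∫ u in (0 : ℝ)..x, Real.exp (-u ^ 2)

lemma hasDerivAt_gaussianPrimitive (x : ℝ) :
    HasDerivAt gaussianPrimitive (Real.exp (-x ^ 2)) x :=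
  (by fun_prop : Continuous fun u : ℝ => Real.exp (-u ^ 2)).integral_hasStrictDerivAt 0 x
    |>.hasDerivAt

lemma gaussianPrimitive_neg (x : ℝ) : gaussianPrimitive (-x) = -gaussianPrimitive x := by
  have h := intervalIntegral.integral_comp_neg (a := 0) (b := x) fun u : ℝ => Real.exp (-u ^ 2)
  simp only [neg_sq, neg_zero] at h
  rw [gaussianPrimitive, intervalIntegral.integral_symm, ← h, gaussianPrimitive]

lemma tendsto_gaussianPrimitive_atTop : Tendsto gaussianPrimitive atTop (𝓝 (√Real.pi / 2)) := by
  have h := intervalIntegral_tendsto_integral_Ioi 0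
    (integrable_exp_neg_mul_sq one_pos).integrableOn tendsto_id
  have hI := integral_gaussian_Ioi 1
  simp only [neg_mul, one_mul, div_one] at h hI
  rwa [hI] at h

lemma tendsto_gaussianPrimitive_atBot : Tendsto gaussianPrimitive atBot (𝓝 (-(√Real.pi / 2))) := by
  refine (tendsto_gaussianPrimitive_atTop.comp tendsto_neg_atBot_atTop).neg.congr fun x => ?_
  simp [gaussianPrimitive_neg]

/-- The functions `e^{-2αγ} ∫₀^{γ√t - α/√t} e^{-u²} du`. The sum of those for `γ = β` and `γ = -β`
is a primitive of `α t^{-3/2} e^{-(α²/t + β²t)}`, as the exponents `-(γ√t - α/√t)² - 2αγ` agree. -/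
noncomputable def invGaussianBranch (α γ t : ℝ) : ℝ :=
  Real.exp (-(2 * α * γ)) * gaussianPrimitive (γ * √t - α / √t)

lemma hasDerivAt_invGaussianBranch (α γ : ℝ) {t : ℝ} (ht : 0 < t) :
    HasDerivAt (invGaussianBranch α γ)
      (Real.exp (-(α ^ 2 / t + γ ^ 2 * t)) * (γ / (2 * √t) + α / (2 * (t * √t)))) t := by
  have hs : 0 < √t := Real.sqrt_pos.2 ht
  have hsq : √t ^ 2 = t := Real.sq_sqrt ht.le
  have harg : HasDerivAt (fun t => γ * √t - α / √t) (γ / (2 * √t) + α / (2 * (t * √t))) t := by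
    have h := ((Real.hasDerivAt_sqrt ht.ne').const_mul γ).sub
      ((hasDerivAt_const t α).div (Real.hasDerivAt_sqrt ht.ne') hs.ne')
    convert! h using 1
    rw [hsq]
    field_simp
    ring
  have hexp : Real.exp (-(2 * α * γ)) * Real.exp (-(γ * √t - α / √t) ^ 2) =
      Real.exp (-(α ^ 2 / t + γ ^ 2 * t)) := by
    rw [← Real.exp_add, sub_sq, mul_pow, div_pow, hsq]
    congr 1
    field_simp
    ring
  refine (((hasDerivAt_gaussianPrimitive _).comp t harg).const_mul _).congr_deriv ?_
  rw [← mul_assoc, hexp]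

lemma tendsto_invGaussianBranch_nhdsGT {α : ℝ} (hα : 0 < α) (γ : ℝ) :
    Tendsto (invGaussianBranch α γ) (𝓝[>] 0)
      (𝓝 (Real.exp (-(2 * α * γ)) * -(√Real.pi / 2))) := by
  have hsqrt : Tendsto Real.sqrt (𝓝[>] 0) (𝓝[>] 0) := by
    refine tendsto_nhdsWithin_iff.2 ⟨?_, ?_⟩
    · simpa using Real.continuous_sqrt.continuousWithinAt.tendsto (x := 0)
    · filter_upwards [self_mem_nhdsWithin] with t ht using Real.sqrt_pos.2 ht
  have hdiv : Tendsto (fun t => -(α / √t)) (𝓝[>] 0) atBot := by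
    simpa [div_eq_mul_inv] using (tendsto_inv_nhdsGT_zero.comp hsqrt).const_mul_atTop hα
  have harg := ((hsqrt.mono_right nhdsWithin_le_nhds).const_mul γ).add_atBot hdiv
  simp only [← sub_eq_add_neg] at harg
  exact (tendsto_gaussianPrimitive_atBot.comp harg).const_mul _

lemma tendsto_invGaussianBranch_atTop (α : ℝ) {γ : ℝ} (hγ : 0 < γ) :
    Tendsto (invGaussianBranch α γ) atTop (𝓝 (Real.exp (-(2 * α * γ)) * (√Real.pi / 2))) := by
  have hdiv : Tendsto (fun t => -(α / √t)) atTop (𝓝 0) := by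
    simpa using (Real.tendsto_sqrt_atTop.const_div_atTop α).neg
  have harg := (Real.tendsto_sqrt_atTop.const_mul_atTop hγ).atTop_add hdiv
  simp only [← sub_eq_add_neg] at harg
  exact (tendsto_gaussianPrimitive_atTop.comp harg).const_mul _

lemma invGaussianBranch_neg (α γ : ℝ) :
    invGaussianBranch α (-γ) = -invGaussianBranch (-α) γ := by
  ext t
  simp only [invGaussianBranch, Pi.neg_apply, ← mul_neg, ← gaussianPrimitive_neg]
  congr 2 <;> ring

variable {α β : ℝ}

lemma hasDerivAt_invGaussianBranch_add_neg (α β : ℝ) {t : ℝ} (ht : 0 < t) :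
    HasDerivAt (invGaussianBranch α β + invGaussianBranch α (-β))
      (α * ((t * √t)⁻¹ * Real.exp (-(α ^ 2 / t + β ^ 2 * t)))) t := by
  refine ((hasDerivAt_invGaussianBranch α β ht).add
    (hasDerivAt_invGaussianBranch α (-β) ht)).congr_deriv ?_
  have := Real.sqrt_pos.2 ht
  rw [neg_sq]
  field_simp
  ring

lemma tendsto_invGaussianBranch_add_neg_nhdsGT (hα : 0 < α) (β : ℝ) :
    Tendsto (invGaussianBranch α β + invGaussianBranch α (-β)) (𝓝[>] 0)
      (𝓝 (-(√Real.pi / 2) * (Real.exp (-(2 * α * β)) + Real.exp (2 * α * β)))) := by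
  convert! (tendsto_invGaussianBranch_nhdsGT hα β).add (tendsto_invGaussianBranch_nhdsGT hα (-β))
    using 2
  ring_nf

lemma tendsto_invGaussianBranch_add_neg_atTop (α : ℝ) (hβ : 0 < β) :
    Tendsto (invGaussianBranch α β + invGaussianBranch α (-β)) atTop
      (𝓝 (√Real.pi / 2 * (Real.exp (-(2 * α * β)) - Real.exp (2 * α * β)))) := by
  rw [invGaussianBranch_neg]
  convert! (tendsto_invGaussianBranch_atTop α hβ).add (tendsto_invGaussianBranch_atTop (-α) hβ).neg
    using 2
  ring_nf

lemma integrableOn_invGaussian_sq (hα : 0 < α) (hβ : 0 < β) :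
    IntegrableOn (fun t => α * ((t * √t)⁻¹ * Real.exp (-(α ^ 2 / t + β ^ 2 * t)))) (Ioi 0) :=
  integrableOn_Ioi_deriv_of_nonneg_of_tendsto_nhdsGT
    (fun _ => hasDerivAt_invGaussianBranch_add_neg α β)
    (fun t (ht : 0 < t) => by positivity)
    (tendsto_invGaussianBranch_add_neg_nhdsGT hα β)
    (tendsto_invGaussianBranch_add_neg_atTop α hβ)

lemma integral_invGaussian_sq (hα : 0 < α) (hβ : 0 < β) :
    ∫ t in Ioi 0, α * ((t * √t)⁻¹ * Real.exp (-(α ^ 2 / t + β ^ 2 * t))) =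
      √Real.pi * Real.exp (-(2 * α * β)) := by
  rw [integral_Ioi_of_hasDerivAt_of_tendsto_nhdsGT
    (fun _ => hasDerivAt_invGaussianBranch_add_neg α β) (integrableOn_invGaussian_sq hα hβ)
    (tendsto_invGaussianBranch_add_neg_nhdsGT hα β) (tendsto_invGaussianBranch_add_neg_atTop α hβ)]
  ring

variable {p q : ℝ}

lemma integrableOn_invGaussian (hp : 0 < p) (hq : 0 < q) :
    IntegrableOn (fun t => (t * √t)⁻¹ * Real.exp (-(p / t + q * t))) (Ioi 0) := by
  have h := integrableOn_invGaussian_sq (Real.sqrt_pos.2 hp) (Real.sqrt_pos.2 hq)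
  rw [Real.sq_sqrt hp.le, Real.sq_sqrt hq.le] at h
  exact (integrable_const_mul_iff (Real.sqrt_pos.2 hp).ne'.isUnit _).1 h

lemma integral_invGaussian (hp : 0 < p) (hq : 0 < q) :
    ∫ t in Ioi 0, (t * √t)⁻¹ * Real.exp (-(p / t + q * t)) =
      √(Real.pi / p) * Real.exp (-(2 * √(p * q))) := by
  have h := integral_invGaussian_sq (Real.sqrt_pos.2 hp) (Real.sqrt_pos.2 hq)
  rw [Real.sq_sqrt hp.le, Real.sq_sqrt hq.le, integral_const_mul] at h
  rw [Real.sqrt_div Real.pi_pos.le, Real.sqrt_mul hp.le, div_mul_eq_mul_div,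
    eq_div_iff (Real.sqrt_pos.2 hp).ne', ← mul_assoc]
  linear_combination h

end InverseGaussian

section Minkowski

variable {𝕜 α β E G : Type*} [RCLike 𝕜] [MeasurableSpace α] [MeasurableSpace β]
  [NormedAddCommGroup E] [InnerProductSpace 𝕜 E] {μ : Measure α} {ν : Measure β}

lemma integral_norm_inner_le (f g : Lp E 2 μ) : ∫ x, ‖⟪f x, g x⟫_𝕜‖ ∂μ ≤ ‖f‖ * ‖g‖ := by
  have h := eLpNorm_le_eLpNorm_mul_eLpNorm'_of_norm (p := 2) (q := 2) (r := 1)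
    (Lp.aestronglyMeasurable f) (Lp.aestronglyMeasurable g) (fun u v => ⟪u, v⟫_𝕜) 1
    (.of_forall fun x => by simpa using norm_inner_le_norm (f x) (g x))
  rw [ENNReal.coe_one, one_mul] at h
  rw [integral_norm_eq_lintegral_enorm (L2.integrable_inner f g).aestronglyMeasurable,
    ← eLpNorm_one_eq_lintegral_enorm, Lp.norm_def, Lp.norm_def, ← ENNReal.toReal_mul]
  exact ENNReal.toReal_mono
    (ENNReal.mul_ne_top (Lp.eLpNorm_ne_top f) (Lp.eLpNorm_ne_top g)) h

variable [SFinite μ] {k : β → α → E} {A B : β → ℝ}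

lemma integrable_prod_inner (g : Lp E 2 μ) (hk : AEStronglyMeasurable k.uncurry (ν.prod μ))
    (hA : Integrable A ν) (hF : ∀ᵐ r ∂ν, ∃ F : Lp E 2 μ, F =ᵐ[μ] k r ∧ ‖F‖ ≤ A r) :
    Integrable (fun z : β × α => ⟪g z.2, k z.1 z.2⟫_𝕜) (ν.prod μ) := by
  have hmeas : AEStronglyMeasurable (fun z : β × α => ⟪g z.2, k z.1 z.2⟫_𝕜) (ν.prod μ) :=
    (Lp.aestronglyMeasurable g).comp_snd.inner hk
  refine (integrable_prod_iff hmeas).2 ⟨?_, ?_⟩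
  · filter_upwards [hF] with r ⟨F, hFk, _⟩
    exact (L2.integrable_inner g F).congr (hFk.mono fun x hx => by simp only [hx])
  · refine (hA.const_mul ‖g‖).mono' hmeas.norm.integral_prod_right' ?_
    filter_upwards [hF] with r ⟨F, hFk, hFA⟩
    have hcongr : ∫ x, ‖⟪g x, k r x⟫_𝕜‖ ∂μ = ∫ x, ‖⟪g x, F x⟫_𝕜‖ ∂μ :=
      integral_congr_ae (hFk.mono fun x hx => by simp only [hx])
    rw [Real.norm_of_nonneg (by positivity), hcongr]
    exact (integral_norm_inner_le g F).trans (by gcongr)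

variable [SFinite ν] [CompleteSpace E] [NormedSpace ℝ E]
  [NormedAddCommGroup G] [InnerProductSpace 𝕜 G] [CompleteSpace G]

/-- Minkowski's integral inequality for a superposition taken pointwise rather than as a Bochner
integral in `Lp`, proved by duality. -/
lemma norm_map_le_integral_of_ae_eq_integral (T : Lp E 2 μ →L[𝕜] G)
    (hk : AEStronglyMeasurable k.uncurry (ν.prod μ)) (hA : Integrable A ν) (hB : Integrable B ν)
    (hF : ∀ᵐ r ∂ν, ∃ F : Lp E 2 μ, F =ᵐ[μ] k r ∧ ‖F‖ ≤ A r ∧ ‖T F‖ ≤ B r)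
    {f : Lp E 2 μ} (hkf : ∀ᵐ x ∂μ, Integrable (k · x) ν) (hf : f =ᵐ[μ] fun x => ∫ r, k r x ∂ν) :
    ‖T f‖ ≤ ∫ r, B r ∂ν := by
  set g : Lp E 2 μ := T.adjoint (T f)
  have hintegrable : Integrable (fun z : β × α => ⟪g z.2, k z.1 z.2⟫_𝕜) (ν.prod μ) :=
    integrable_prod_inner g hk hA (hF.mono fun r ⟨F, hFk, hFA, _⟩ => ⟨F, hFk, hFA⟩)
  have hswap : ⟪g, f⟫_𝕜 = ∫ r, ∫ x, ⟪g x, k r x⟫_𝕜 ∂μ ∂ν := by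
    rw [integral_integral_swap hintegrable, L2.inner_def]
    refine integral_congr_ae ?_
    filter_upwards [hf, hkf] with x hx hkx
    rw [hx, ← integral_inner hkx]
  have hinner : ∀ᵐ r ∂ν, ‖∫ x, ⟪g x, k r x⟫_𝕜 ∂μ‖ ≤ ‖T f‖ * B r := by
    filter_upwards [hF] with r ⟨F, hFk, _, hFB⟩
    calc ‖∫ x, ⟪g x, k r x⟫_𝕜 ∂μ‖ = ‖⟪g, F⟫_𝕜‖ := by
          rw [L2.inner_def, integral_congr_ae (hFk.mono fun x hx => congrArg (⟪g x, ·⟫_𝕜) hx)]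
      _ = ‖⟪T f, T F⟫_𝕜‖ := by rw [ContinuousLinearMap.adjoint_inner_left]
      _ ≤ ‖T f‖ * B r := (norm_inner_le_norm _ _).trans (by gcongr)
  have hsq : ‖T f‖ * ‖T f‖ ≤ ‖T f‖ * ∫ r, B r ∂ν := by
    calc ‖T f‖ * ‖T f‖ = ‖⟪g, f⟫_𝕜‖ := by
          rw [ContinuousLinearMap.adjoint_inner_left, ← inner_self_re_eq_norm,
            inner_self_eq_norm_mul_norm]
      _ ≤ ‖T f‖ * ∫ r, B r ∂ν := by
          rw [hswap, ← integral_const_mul]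
          exact norm_integral_le_of_norm_le (hB.const_mul _) hinner
  rcases (norm_nonneg (T f)).eq_or_lt with h0 | hpos
  · rw [← h0]
    exact integral_nonneg_of_ae (hF.mono fun r ⟨F, _, _, hFB⟩ => (norm_nonneg _).trans hFB)
  · exact le_of_mul_le_mul_left hsq hpos

end Minkowski

section CothHalf

/-- The function `coth (s / 2) = (e^s + 1) / (e^s - 1)`, the inverse Cayley transform of `e^{-s}`.
It maps the right half-plane to itself. -/
noncomputable def cothHalf (s : ℂ) : ℂ := 1 + 2 / (Complex.exp s - 1)

lemma exp_re_sub_one_le_norm_cexp_sub_one (s : ℂ) :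
    Real.exp s.re - 1 ≤ ‖Complex.exp s - 1‖ := by
  simpa [Complex.norm_exp] using norm_sub_norm_le (Complex.exp s) 1

lemma mul_exp_half_le_exp_sub_one {x : ℝ} (hx : 0 ≤ x) :
    x * Real.exp (x / 2) ≤ Real.exp x - 1 := by
  have hsinh : x ≤ Real.exp (x / 2) - Real.exp (-(x / 2)) := by
    have h := Real.self_le_sinh_iff.2 (by linarith : 0 ≤ x / 2)
    rw [Real.sinh_eq] at h
    linarith
  calc x * Real.exp (x / 2) ≤ (Real.exp (x / 2) - Real.exp (-(x / 2))) * Real.exp (x / 2) := by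
        gcongr
    _ = Real.exp x - 1 := by
        rw [sub_mul, ← Real.exp_add, ← Real.exp_add, neg_add_cancel, Real.exp_zero, add_halves]

lemma re_le_norm_cexp_sub_one (s : ℂ) : s.re ≤ ‖Complex.exp s - 1‖ := by
  linarith [Real.add_one_le_exp s.re, exp_re_sub_one_le_norm_cexp_sub_one s]

variable {s : ℂ} (hs : 0 < s.re)
include hs

lemma cexp_sub_one_ne_zero : Complex.exp s - 1 ≠ 0 :=
  norm_pos_iff.1 (hs.trans_le (re_le_norm_cexp_sub_one s))

lemma cothHalf_sub_one_div_add_one : (cothHalf s - 1) / (cothHalf s + 1) = Complex.exp (-s) := by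
  have h := cexp_sub_one_ne_zero hs
  have hadd : cothHalf s + 1 = 2 * Complex.exp s / (Complex.exp s - 1) := by
    rw [cothHalf]
    field_simp
    ring
  rw [hadd, cothHalf, add_sub_cancel_left, div_div_div_cancel_right₀ h, Complex.exp_neg,
    ← div_div, div_self two_ne_zero, one_div]

lemma re_cothHalf : (cothHalf s).re = (Real.exp s.re ^ 2 - 1) / ‖Complex.exp s - 1‖ ^ 2 := by
  have h := cexp_sub_one_ne_zero hs
  have hsq : ‖Complex.exp s - 1‖ ^ 2 ≠ 0 := pow_ne_zero 2 (norm_ne_zero_iff.2 h)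
  rw [eq_div_iff hsq, cothHalf, ← Complex.norm_exp, Complex.sq_norm, Complex.sq_norm,
    Complex.add_re, Complex.div_re]
  rw [Complex.sq_norm] at hsq
  field_simp
  simp only [Complex.normSq_apply, Complex.sub_re, Complex.sub_im, Complex.one_re, Complex.one_im,
    Complex.re_ofNat, Complex.im_ofNat]
  ring

lemma re_cothHalf_pos : 0 < (cothHalf s).re := by
  have h := cexp_sub_one_ne_zero hs
  rw [re_cothHalf hs]
  have : 1 < Real.exp s.re ^ 2 := one_lt_pow₀ (Real.one_lt_exp_iff.2 hs) two_ne_zero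
  exact div_pos (by linarith) (by positivity)

lemma hasDerivAt_cothHalf :
    HasDerivAt cothHalf (-(2 * Complex.exp s / (Complex.exp s - 1) ^ 2)) s := by
  have h := ((hasDerivAt_const s (2 : ℂ)).div ((Complex.hasDerivAt_exp s).sub_const 1)
    (cexp_sub_one_ne_zero hs)).const_add 1
  refine h.congr_deriv ?_
  ring

lemma norm_sq_deriv_cothHalf_le :
    ‖deriv cothHalf s‖ ^ 2 ≤ 2 * (cothHalf s).re * (2 * Real.exp (-(s.re / 2)) / s.re ^ 3) := by
  have hexp : 0 < Real.exp s.re - 1 := by linarith [Real.add_one_le_exp s.re]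
  have hlow := exp_re_sub_one_le_norm_cexp_sub_one s
  set x := s.re
  set w := ‖Complex.exp s - 1‖
  have hw : 0 < w := hexp.trans_le hlow
  have hcube : x ^ 3 * Real.exp (3 * x / 2) ≤ (Real.exp x - 1) * w ^ 2 := by
    calc x ^ 3 * Real.exp (3 * x / 2) = (x * Real.exp (x / 2)) ^ 3 := by
          rw [mul_pow, ← Real.exp_nat_mul]
          ring_nf
      _ ≤ (Real.exp x - 1) ^ 3 := by gcongr; exact mul_exp_half_le_exp_sub_one hs.le
      _ = (Real.exp x - 1) * (Real.exp x - 1) ^ 2 := by ring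
      _ ≤ (Real.exp x - 1) * w ^ 2 := by gcongr
  have hsplit : Real.exp x = Real.exp (3 * x / 2) * Real.exp (-(x / 2)) := by
    rw [← Real.exp_add]
    ring_nf
  rw [(hasDerivAt_cothHalf hs).deriv, re_cothHalf hs, norm_neg, norm_div, norm_mul, norm_pow,
    Complex.norm_exp, Complex.norm_ofNat, div_pow, div_le_iff₀ (by positivity)]
  calc (2 * Real.exp x) ^ 2
      ≤ 4 * (Real.exp x * (Real.exp x + 1)) := by nlinarith [Real.exp_pos x]
    _ = 4 * Real.exp (-(x / 2)) / x ^ 3 * (Real.exp x + 1) * (x ^ 3 * Real.exp (3 * x / 2)) := by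
        nth_rw 1 [hsplit]
        field_simp
    _ ≤ 4 * Real.exp (-(x / 2)) / x ^ 3 * (Real.exp x + 1) * ((Real.exp x - 1) * w ^ 2) := by
        gcongr
    _ = 2 * ((Real.exp x ^ 2 - 1) / w ^ 2) * (2 * Real.exp (-(x / 2)) / x ^ 3) * (w ^ 2) ^ 2 := by
        field_simp
        ring

lemma norm_deriv_cothHalf_le :
    ‖deriv cothHalf s‖ ≤
      √(2 * (cothHalf s).re) * (√2 * Real.exp (-(s.re / 4)) / (s.re * √s.re)) := by
  have hre := re_cothHalf_pos hs
  refine le_of_sq_le_sq ?_ (by positivity)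
  refine (norm_sq_deriv_cothHalf_le hs).trans_eq ?_
  rw [mul_pow, div_pow, mul_pow, mul_pow, Real.sq_sqrt (by positivity), Real.sq_sqrt zero_le_two,
    Real.sq_sqrt hs.le, ← Real.exp_nat_mul]
  ring_nf

lemma norm_inv_cexp_sub_one_sub_inv_le :
    ‖(Complex.exp s - 1)⁻¹ - s⁻¹‖ ≤ ‖s‖ / s.re + 1 := by
  have h0 := cexp_sub_one_ne_zero hs
  have hs0 : s ≠ 0 := by rintro rfl; simp at hs
  have hsn : 0 < ‖s‖ := norm_pos_iff.2 hs0
  have hlow := re_le_norm_cexp_sub_one s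
  rcases le_total ‖s‖ 1 with h | h
  · calc ‖(Complex.exp s - 1)⁻¹ - s⁻¹‖
        = ‖Complex.exp s - 1 - s‖ / (‖Complex.exp s - 1‖ * ‖s‖) := by
          rw [inv_sub_inv h0 hs0, norm_div, norm_mul, norm_sub_rev]
      _ ≤ ‖s‖ ^ 2 / (s.re * ‖s‖) := by
          gcongr
          exact Complex.norm_exp_sub_one_sub_id_le h
      _ = ‖s‖ / s.re := by field_simp
      _ ≤ ‖s‖ / s.re + 1 := by linarith
  · calc ‖(Complex.exp s - 1)⁻¹ - s⁻¹‖ ≤ 1 / ‖Complex.exp s - 1‖ + 1 / ‖s‖ := by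
          simpa using norm_sub_le (Complex.exp s - 1)⁻¹ s⁻¹
      _ ≤ ‖s‖ / s.re + 1 := by gcongr; exact (div_le_one hsn).2 h

end CothHalf

section LaplaceTransform

variable {b : ℂ}

lemma norm_pow_mul_cexp_neg_mul (n : ℕ) {t : ℝ} (ht : 0 ≤ t) :
    ‖(t : ℂ) ^ n * Complex.exp (-b * t)‖ = t ^ n * Real.exp (-b.re * t) := by
  rw [norm_mul, norm_pow, Complex.norm_exp, Complex.norm_real, Real.norm_of_nonneg ht,
    Complex.re_mul_ofReal, Complex.neg_re]

lemma integrableOn_pow_mul_cexp_neg_mul (hb : 0 < b.re) (n : ℕ) :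
    IntegrableOn (fun t : ℝ => (t : ℂ) ^ n * Complex.exp (-b * t)) (Ioi 0) := by
  have hreal : IntegrableOn (fun t : ℝ => t ^ n * Real.exp (-b.re * t)) (Ioi 0) := by
    simpa using integrableOn_rpow_mul_exp_neg_mul_rpow (p := 1) (s := n) (b := b.re)
      (neg_one_lt_zero.trans_le n.cast_nonneg) one_pos hb
  refine hreal.mono' (by fun_prop) ?_
  filter_upwards [ae_restrict_mem measurableSet_Ioi] with t ht
  exact (norm_pow_mul_cexp_neg_mul n (le_of_lt ht)).le

lemma tendsto_pow_mul_cexp_neg_mul_atTop (hb : 0 < b.re) (n : ℕ) :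
    Tendsto (fun t : ℝ => (t : ℂ) ^ n * Complex.exp (-b * t)) atTop (𝓝 0) := by
  rw [tendsto_zero_iff_norm_tendsto_zero]
  refine (tendsto_rpow_mul_exp_neg_mul_atTop_nhds_zero n b.re hb).congr' ?_
  filter_upwards [eventually_ge_atTop 0] with t ht
  rw [norm_pow_mul_cexp_neg_mul n ht, Real.rpow_natCast]

lemma hasDerivAt_pow_succ_mul_cexp_neg_mul (n : ℕ) (t : ℝ) :
    HasDerivAt (fun t : ℝ => (t : ℂ) ^ (n + 1) * Complex.exp (-b * t))
      ((n + 1) * (t ^ n * Complex.exp (-b * t)) - b * (t ^ (n + 1) * Complex.exp (-b * t))) t := by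
  have hpow := (hasDerivAt_id (t : ℂ)).comp_ofReal.pow (n + 1)
  have hexp := ((hasDerivAt_id (t : ℂ)).comp_ofReal.const_mul (-b)).cexp
  refine (hpow.mul hexp).congr_deriv ?_
  simp only [Nat.cast_add_one, id_eq, add_tsub_cancel_right, mul_one, Pi.pow_apply]
  ring

lemma integral_pow_mul_cexp_neg_mul (hb : 0 < b.re) (n : ℕ) :
    ∫ t in Ioi (0 : ℝ), (t : ℂ) ^ n * Complex.exp (-b * t) = n.factorial / b ^ (n + 1) := by
  have hb₀ : b ≠ 0 := by rintro rfl; simp at hb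
  induction n with
  | zero =>
    simpa [neg_div_neg_eq] using integral_exp_mul_complex_Ioi (a := -b) (by simpa using hb) 0
  | succ n ih =>
    have hint₀ := (integrableOn_pow_mul_cexp_neg_mul hb n).const_mul (n + 1 : ℂ)
    have hint₁ := (integrableOn_pow_mul_cexp_neg_mul hb (n + 1)).const_mul b
    have hparts : (n + 1) * (n.factorial / b ^ (n + 1)) -
        b * ∫ t in Ioi (0 : ℝ), (t : ℂ) ^ (n + 1) * Complex.exp (-b * t) = 0 := by
      rw [← ih, ← integral_const_mul, ← integral_const_mul, ← integral_sub hint₀ hint₁]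
      simpa using integral_Ioi_of_hasDerivAt_of_tendsto (a := 0) (Continuous.continuousWithinAt
        (by fun_prop)) (fun t _ => hasDerivAt_pow_succ_mul_cexp_neg_mul n t) (hint₀.sub hint₁)
        (tendsto_pow_mul_cexp_neg_mul_atTop hb (n + 1))
    rw [Nat.factorial_succ, eq_div_iff (pow_ne_zero _ hb₀)]
    field_simp at hparts
    simp only [neg_mul, Nat.cast_mul, Nat.cast_succ]
    linear_combination -hparts

end LaplaceTransform

section Laguerre

/-- The polynomial `L_n(2X)`, so that `φ_n(x) = L_n(2x) e^{-x}` is its value times `e^{-x}`. -/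
noncomputable def laguerrePoly (n : ℕ) : ℂ[X] :=
  ∑ k ∈ Finset.range (n + 1), monomial k ((n.choose k : ℂ) * (-2) ^ k / k.factorial)

lemma coeff_laguerrePoly (n k : ℕ) :
    (laguerrePoly n).coeff k = (n.choose k : ℂ) * (-2) ^ k / k.factorial := by
  rw [laguerrePoly, finsetSum_coeff]
  simp only [coeff_monomial, Finset.sum_ite_eq', Finset.mem_range]
  split_ifs with h
  · rfl
  · rw [Nat.choose_eq_zero_of_lt (by omega)]; simp

lemma degree_laguerrePoly (n : ℕ) : (laguerrePoly n).degree = n := by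
  refine le_antisymm (degree_le_iff_coeff_zero _ _ |>.2 fun k hk => ?_) (le_degree_of_ne_zero ?_)
  · rw [coeff_laguerrePoly, Nat.choose_eq_zero_of_lt (by exact_mod_cast hk)]
    simp
  · simp [coeff_laguerrePoly, Nat.factorial_ne_zero]

lemma eval_laguerrePoly (n : ℕ) (z : ℂ) :
    (laguerrePoly n).eval z =
      ∑ k ∈ Finset.range (n + 1), (n.choose k : ℂ) * (-2) ^ k / k.factorial * z ^ k := by
  simp [laguerrePoly, eval_finsetSum]

lemma ofReal_lagPhi (n : ℕ) (x : ℝ) :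
    (lagPhi n x : ℂ) = (laguerrePoly n).eval (x : ℂ) * Complex.exp (-x) := by
  rw [eval_laguerrePoly, lagPhi, lagL, mul_comm]
  push_cast
  congr 1
  refine Finset.sum_congr rfl fun k hk => ?_
  rw [Nat.choose_symm (Finset.mem_range_succ_iff.1 hk), ← neg_mul, mul_pow]
  ring

lemma mul_lagPhi (z : ℂ) (n : ℕ) (t : ℝ) :
    z * (lagPhi n t : ℂ) = ∑ k ∈ Finset.range (n + 1),
      (n.choose k : ℂ) * (-2) ^ k / k.factorial * (t ^ k * (z * Complex.exp (-t))) := by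
  rw [ofReal_lagPhi, eval_laguerrePoly, Finset.sum_mul, Finset.mul_sum]
  exact Finset.sum_congr rfl fun k _ => by ring

lemma integral_cexp_neg_mul_lagPhi {b : ℂ} (hb : 0 < b.re) (n : ℕ) :
    ∫ t in Ioi (0 : ℝ), Complex.exp (-b * t) * (lagPhi n t : ℂ) =
      (b - 1) ^ n / (b + 1) ^ (n + 1) := by
  have hre : 0 < (b + 1).re := by simpa using add_pos hb one_pos
  have hb₁ : b + 1 ≠ 0 := by rintro h; simp [h] at hre
  have hexp (t : ℝ) : Complex.exp (-b * t) * Complex.exp (-t) = Complex.exp (-(b + 1) * t) := by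
    rw [← Complex.exp_add]; ring_nf
  calc ∫ t in Ioi (0 : ℝ), Complex.exp (-b * t) * (lagPhi n t : ℂ)
      = ∑ k ∈ Finset.range (n + 1), (n.choose k : ℂ) * (-2) ^ k / k.factorial *
          (k.factorial / (b + 1) ^ (k + 1)) := by
        simp only [mul_lagPhi, hexp]
        rw [integral_finsetSum _ fun k _ => (integrableOn_pow_mul_cexp_neg_mul hre k).const_mul _]
        simp only [integral_const_mul, integral_pow_mul_cexp_neg_mul hre]
    _ = (-2 / (b + 1) + 1) ^ n / (b + 1) := by
        rw [add_pow, Finset.sum_div]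
        refine Finset.sum_congr rfl fun k _ => ?_
        have := Nat.cast_ne_zero (R := ℂ).2 k.factorial_ne_zero
        rw [div_pow]
        field_simp
        ring
    _ = (b - 1) ^ n / (b + 1) ^ (n + 1) := by
        rw [div_add_one hb₁, div_pow, div_div, ← pow_succ]
        ring

lemma fwdDiff_iter_eval_zero {P : ℂ[X]} {n : ℕ} (hP : P.natDegree ≤ n) :
    (fwdDiff 1)^[n] P.eval 0 = n.factorial * P.coeff n := by
  rcases hP.lt_or_eq with hlt | rfl
  · rw [fwdDiff_iter_eq_zero_of_degree_lt hlt, coeff_eq_zero_of_natDegree_lt hlt]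
    simp
  · rw [fwdDiff_iter_degree_eq_factorial]
    simp [mul_comm]

lemma sum_neg_one_pow_mul_choose_mul_eval {P : ℂ[X]} {n : ℕ} (hP : P.natDegree ≤ n) :
    ∑ k ∈ Finset.range (n + 1), (-1) ^ k * (n.choose k : ℂ) * P.eval (k : ℂ) =
      (-1) ^ n * (n.factorial * P.coeff n) := by
  rw [← fwdDiff_iter_eval_zero hP, fwdDiff_iter_eq_sum_shift, Finset.mul_sum]
  refine Finset.sum_congr rfl fun k hk => ?_
  have hsign : (-1 : ℂ) ^ n * (-1) ^ (n - k) = (-1) ^ k := by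
    rw [← pow_add, show n + (n - k) = 2 * (n - k) + k by grind, pow_add, pow_mul]
    simp
  rw [← hsign]
  simp [mul_assoc]

lemma eval_ascPochhammer_comp_X_add_one (j k : ℕ) :
    ((ascPochhammer ℂ j).comp (X + 1)).eval (k : ℂ) = (k + j).factorial / k.factorial := by
  rw [eq_div_iff (Nat.cast_ne_zero.2 k.factorial_ne_zero), eval_comp, eval_add, eval_X, eval_one,
    ← Nat.cast_add_one, ← ascPochhammer_eval_cast, ascPochhammer_nat_eq_ascFactorial, mul_comm]
  exact_mod_cast Nat.factorial_mul_ascFactorial k j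

lemma natDegree_ascPochhammer_comp_X_add_one (j : ℕ) :
    ((ascPochhammer ℂ j).comp (X + 1)).natDegree = j := by
  rw [natDegree_comp, ascPochhammer_natDegree, ← C_1, natDegree_X_add_C, mul_one]

lemma coeff_ascPochhammer_comp_X_add_one {n j : ℕ} (hj : j ≤ n) :
    ((ascPochhammer ℂ j).comp (X + 1)).coeff n = if j = n then 1 else 0 := by
  have hdeg := natDegree_ascPochhammer_comp_X_add_one j
  split_ifs with h
  · subst h
    simpa [Monic, leadingCoeff, hdeg] using (monic_ascPochhammer ℂ j).comp_X_add_C 1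
  · exact coeff_eq_zero_of_natDegree_lt (by omega)

lemma integral_pow_mul_cexp_neg_mul_lagPhi {n j : ℕ} (hj : j ≤ n) :
    ∫ t in Ioi (0 : ℝ), ((t : ℂ) ^ j * Complex.exp (-t)) * (lagPhi n t : ℂ) =
      (if j = n then 1 else 0) * ((-1) ^ n * n.factorial / 2 ^ (n + 1)) := by
  set P : ℂ[X] := (ascPochhammer ℂ j).comp (X + 1)
  have hexp (t : ℝ) (k : ℕ) : (t : ℂ) ^ k * (t ^ j * Complex.exp (-t) * Complex.exp (-t)) =
      t ^ (k + j) * Complex.exp (-2 * t) := by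
    rw [show (-2 : ℂ) * t = -t + -t by ring, Complex.exp_add]
    ring
  have hre : 0 < (2 : ℂ).re := two_pos
  simp only [mul_lagPhi, hexp]
  rw [integral_finsetSum _ fun k _ => (integrableOn_pow_mul_cexp_neg_mul hre (k + j)).const_mul _]
  simp only [integral_const_mul, integral_pow_mul_cexp_neg_mul hre]
  calc ∑ k ∈ Finset.range (n + 1), (n.choose k : ℂ) * (-2) ^ k / k.factorial *
        ((k + j).factorial / 2 ^ (k + j + 1))
      = (∑ k ∈ Finset.range (n + 1), (-1) ^ k * (n.choose k : ℂ) * P.eval (k : ℂ)) /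
          2 ^ (j + 1) := by
        rw [Finset.sum_div]
        refine Finset.sum_congr rfl fun k _ => ?_
        rw [eval_ascPochhammer_comp_X_add_one, neg_pow]
        field_simp
        ring
    _ = (if j = n then 1 else 0) * ((-1) ^ n * n.factorial / 2 ^ (n + 1)) := by
        rw [sum_neg_one_pow_mul_choose_mul_eval
          ((natDegree_ascPochhammer_comp_X_add_one j).trans_le hj),
          coeff_ascPochhammer_comp_X_add_one hj]
        split_ifs with h <;> simp [h]

end Laguerre

section FourierResidual

variable {𝕜 E : Type*} [RCLike 𝕜] [NormedAddCommGroup E] [InnerProductSpace 𝕜 E] {e : ℕ → E}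

variable (𝕜) in
/-- The residual `x - ∑_{n < M} ⟪e n, x⟫ • e n` of the truncated Fourier expansion along `e`. When
`e` is orthonormal this is the orthogonal projection onto the complement of `e 0, …, e (M - 1)`. -/
noncomputable def fourierResidual (e : ℕ → E) (M : ℕ) : E →L[𝕜] E :=
  .id 𝕜 E - ∑ n ∈ Finset.range M, InnerProductSpace.rankOne 𝕜 (e n) (e n)

lemma fourierResidual_apply (e : ℕ → E) (M : ℕ) (x : E) :
    fourierResidual 𝕜 e M x = x - ∑ n ∈ Finset.range M, ⟪e n, x⟫_𝕜 • e n := by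
  simp [fourierResidual]

lemma norm_sq_fourierResidual (he : Orthonormal 𝕜 e) (M : ℕ) (x : E) :
    ‖fourierResidual 𝕜 e M x‖ ^ 2 = ‖x‖ ^ 2 - ∑ n ∈ Finset.range M, ‖⟪e n, x⟫_𝕜‖ ^ 2 := by
  set P : E := ∑ n ∈ Finset.range M, ⟪e n, x⟫_𝕜 • e n
  have hPx : ⟪P, x⟫_𝕜 = ((∑ n ∈ Finset.range M, ‖⟪e n, x⟫_𝕜‖ ^ 2 : ℝ) : 𝕜) := by
    simp only [P, sum_inner, inner_smul_left, RCLike.conj_mul]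
    push_cast
    rfl
  have hPP : ⟪P, P⟫_𝕜 = ((∑ n ∈ Finset.range M, ‖⟪e n, x⟫_𝕜‖ ^ 2 : ℝ) : 𝕜) := by
    simp only [P, he.inner_sum, RCLike.conj_mul]
    push_cast
    rfl
  rw [fourierResidual_apply, @norm_sub_sq 𝕜, ← inner_conj_symm, RCLike.conj_re, hPx,
    @norm_sq_eq_re_inner 𝕜 _ _ _ _ P, hPP, RCLike.ofReal_re]
  ring

lemma fourierResidual_eq_zero_of_mem_span (he : Orthonormal 𝕜 e) {M : ℕ} {x : E}
    (hx : x ∈ Submodule.span 𝕜 (e '' Iio M)) : fourierResidual 𝕜 e M x = 0 := by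
  have hle : Submodule.span 𝕜 (e '' Iio M) ≤ (fourierResidual 𝕜 e M : E →ₗ[𝕜] E).ker := by
    rw [Submodule.span_le]
    rintro _ ⟨m, hm, rfl⟩
    have hm' : m < M := hm
    simp [fourierResidual_apply, orthonormal_iff_ite.1 he, hm']
  exact hle hx

end FourierResidual

section HalfLine

/-- The Hilbert space `L²((0, ∞))` of complex-valued functions. -/
abbrev HalfLineL2 : Type := Lp ℂ 2 (volume.restrict (Ioi (0 : ℝ)))

lemma inner_toLp_toLp {α : Type*} [MeasurableSpace α] {μ : Measure α} {f g : α → ℂ}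
    (hf : MemLp f 2 μ) (hg : MemLp g 2 μ) :
    ⟪hf.toLp f, hg.toLp g⟫_ℂ = ∫ x, g x * (starRingEnd ℂ) (f x) ∂μ := by
  rw [L2.inner_def]
  refine integral_congr_ae ?_
  filter_upwards [hf.coeFn_toLp, hg.coeFn_toLp] with x hfx hgx
  rw [hfx, hgx, RCLike.inner_apply]

lemma memLp_pow_mul_cexp_neg_mul {b : ℂ} (hb : 0 < b.re) (n : ℕ) :
    MemLp (fun t : ℝ => (t : ℂ) ^ n * Complex.exp (-b * t)) 2 (volume.restrict (Ioi 0)) := by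
  rw [memLp_two_iff_integrable_sq_norm (by fun_prop)]
  have hb₂ : 0 < (2 * b).re := by simpa using hb
  refine (integrableOn_pow_mul_cexp_neg_mul hb₂ (n * 2)).norm.congr (ae_of_all _ fun t => ?_)
  simp only
  rw [← norm_pow, mul_pow, ← pow_mul, ← Complex.exp_nat_mul]
  ring_nf

lemma memLp_eval_mul_cexp_neg (p : ℂ[X]) :
    MemLp (fun x : ℝ => p.eval (x : ℂ) * Complex.exp (-x)) 2 (volume.restrict (Ioi 0)) := by
  induction p using Polynomial.induction_on' with
  | add p q hp hq =>
    refine (hp.add hq).ae_eq (ae_of_all _ fun x => ?_)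
    simp only [Pi.add_apply, eval_add, add_mul]
  | monomial n c =>
    simpa [mul_assoc] using (memLp_pow_mul_cexp_neg_mul (b := 1) (by simp) n).const_mul c

/-- The weighted polynomials `x ↦ p(x) e^{-x}` as elements of `L²((0, ∞))`. -/
noncomputable def expPoly : ℂ[X] →ₗ[ℂ] HalfLineL2 where
  toFun p := (memLp_eval_mul_cexp_neg p).toLp
  map_add' p q := by
    rw [← MemLp.toLp_add]
    exact MemLp.toLp_congr _ _ (ae_of_all _ fun x => by simp [add_mul])
  map_smul' c p := by
    rw [RingHom.id_apply, ← MemLp.toLp_const_smul]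
    exact MemLp.toLp_congr _ _ (ae_of_all _ fun x => by simp [mul_assoc])

lemma coeFn_expPoly (p : ℂ[X]) :
    expPoly p =ᵐ[volume.restrict (Ioi 0)] fun x : ℝ => p.eval (x : ℂ) * Complex.exp (-x) :=
  (memLp_eval_mul_cexp_neg p).coeFn_toLp

/-- The normalized Laguerre functions `√2 φ_n` as elements of `L²((0, ∞))`. -/
noncomputable def laguerreFun (n : ℕ) : HalfLineL2 :=
  ((√2 : ℝ) : ℂ) • expPoly (laguerrePoly n)

lemma coeFn_laguerreFun (n : ℕ) :
    laguerreFun n =ᵐ[volume.restrict (Ioi 0)] fun x : ℝ => ((√2 : ℝ) : ℂ) * lagPhi n x := by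
  filter_upwards [Lp.coeFn_smul ((√2 : ℝ) : ℂ) (expPoly (laguerrePoly n)),
    coeFn_expPoly (laguerrePoly n)] with x hsmul hpoly
  rw [laguerreFun, hsmul, Pi.smul_apply, hpoly, ofReal_lagPhi, smul_eq_mul]

lemma inner_laguerreFun_toLp {f : ℝ → ℂ} (hf : MemLp f 2 (volume.restrict (Ioi 0))) (n : ℕ) :
    ⟪laguerreFun n, hf.toLp f⟫_ℂ = (√2 : ℝ) * ∫ t in Ioi (0 : ℝ), f t * lagPhi n t := by
  rw [laguerreFun, inner_smul_left, Complex.conj_ofReal]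
  congr 1
  refine (inner_toLp_toLp (memLp_eval_mul_cexp_neg _) hf).trans ?_
  simp only [← ofReal_lagPhi, Complex.conj_ofReal]

lemma inner_laguerreFun_expPoly_monomial {n j : ℕ} (hj : j ≤ n) (c : ℂ) :
    ⟪laguerreFun n, expPoly (monomial j c)⟫_ℂ =
      if j = n then (√2 : ℝ) * (c * ((-1) ^ n * n.factorial / 2 ^ (n + 1))) else 0 := by
  refine (inner_laguerreFun_toLp (memLp_eval_mul_cexp_neg _) n).trans ?_
  simp only [eval_monomial, mul_assoc c]
  rw [integral_const_mul]
  simp only [integral_pow_mul_cexp_neg_mul_lagPhi hj]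
  split_ifs <;> simp

lemma inner_laguerreFun_expPoly {n : ℕ} {p : ℂ[X]} (hp : p.natDegree ≤ n) :
    ⟪laguerreFun n, expPoly p⟫_ℂ =
      (√2 : ℝ) * (p.coeff n * ((-1) ^ n * n.factorial / 2 ^ (n + 1))) := by
  conv_lhs => rw [p.as_sum_range' (n + 1) (Nat.lt_succ_of_le hp), map_sum, inner_sum]
  rw [Finset.sum_congr rfl fun j hj =>
    inner_laguerreFun_expPoly_monomial (Finset.mem_range_succ_iff.1 hj) (p.coeff j)]
  simp

lemma orthonormal_laguerreFun : Orthonormal ℂ laguerreFun := by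
  have hinner {m n : ℕ} (hmn : m ≤ n) :
      ⟪laguerreFun n, laguerreFun m⟫_ℂ = if m = n then 1 else 0 := by
    nth_rw 2 [laguerreFun]
    rw [inner_smul_right, inner_laguerreFun_expPoly
      (natDegree_le_of_degree_le (by simpa [degree_laguerrePoly] using hmn)), coeff_laguerrePoly,
      ← mul_assoc, ← Complex.ofReal_mul, Real.mul_self_sqrt zero_le_two]
    split_ifs with h
    · subst h
      have := Nat.cast_ne_zero (R := ℂ).2 m.factorial_ne_zero
      rw [neg_pow]
      field_simp
      rw [← pow_mul, mul_comm m 2, pow_mul, neg_one_sq, one_pow, Nat.choose_self, Nat.cast_one,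
        Complex.ofReal_ofNat]
      ring
    · rw [Nat.choose_eq_zero_of_lt (hmn.lt_of_ne h)]
      simp
  rw [orthonormal_iff_ite]
  intro m n
  rcases le_total m n with hmn | hnm
  · rw [← inner_conj_symm, hinner hmn]
    split_ifs <;> simp
  · rw [hinner hnm]
    simp only [eq_comm]

lemma expPoly_mem_span {p : ℂ[X]} {M : ℕ} (hp : p.degree < M) :
    expPoly p ∈ Submodule.span ℂ (laguerreFun '' Iio M) := by
  let L : Polynomial.Sequence ℂ := ⟨laguerrePoly, degree_laguerrePoly⟩
  have hspan : Submodule.span ℂ (L '' Iio M) = degreeLT ℂ M :=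
    L.span_degreeLT fun n _ => (leadingCoeff_ne_zero.2 (L.ne_zero n)).isUnit
  have hle : Submodule.span ℂ (L '' Iio M) ≤
      (Submodule.span ℂ (laguerreFun '' Iio M)).comap expPoly := by
    rw [Submodule.span_le]
    rintro _ ⟨n, hn, rfl⟩
    have hsqrt : ((√2 : ℝ) : ℂ) ≠ 0 := by simp
    have hmem : ((√2 : ℝ) : ℂ) • expPoly (L n) ∈ Submodule.span ℂ (laguerreFun '' Iio M) :=
      Submodule.subset_span (mem_image_of_mem laguerreFun hn)
    exact ((Submodule.span ℂ (laguerreFun '' Iio M)).smul_mem_iff hsqrt).1 hmem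
  exact hle (hspan ▸ mem_degreeLT.2 hp)

/-- The orthogonal projection of `L²((0, ∞))` onto the complement of `φ_0, …, φ_{M-1}`, so that
`I - Π_N` is the case `M = N + 1`. -/
noncomputable abbrev laguerreResidual (M : ℕ) : HalfLineL2 →L[ℂ] HalfLineL2 :=
  fourierResidual ℂ laguerreFun M

lemma laguerreResidual_expPoly {p : ℂ[X]} {M : ℕ} (hp : p.degree < M) :
    laguerreResidual M (expPoly p) = 0 :=
  fourierResidual_eq_zero_of_mem_span orthonormal_laguerreFun (expPoly_mem_span hp)

lemma coeFn_laguerreResidual_toLp {f : ℝ → ℂ} (hf : MemLp f 2 (volume.restrict (Ioi 0))) (N : ℕ) :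
    laguerreResidual (N + 1) (hf.toLp f) =ᵐ[volume.restrict (Ioi 0)]
      fun x => f x - lagProj N f x := by
  rw [fourierResidual_apply]
  have hterm : ∀ᵐ x ∂volume.restrict (Ioi 0), ∀ n : ℕ,
      (⟪laguerreFun n, hf.toLp f⟫_ℂ • laguerreFun n) x =
        (2 * ∫ t in Ioi (0 : ℝ), f t * lagPhi n t) * lagPhi n x := by
    refine ae_all_iff.2 fun n => ?_
    filter_upwards [Lp.coeFn_smul ⟪laguerreFun n, hf.toLp f⟫_ℂ (laguerreFun n),
      coeFn_laguerreFun n] with x hsmul hfun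
    have hsqrt : ((√2 : ℝ) : ℂ) * (√2 : ℝ) = 2 := by
      rw [← Complex.ofReal_mul, Real.mul_self_sqrt zero_le_two, Complex.ofReal_ofNat]
    rw [hsmul, Pi.smul_apply, hfun, inner_laguerreFun_toLp hf, ← hsqrt, smul_eq_mul]
    ring
  filter_upwards [Lp.coeFn_sub (hf.toLp f) _, hf.coeFn_toLp, hterm,
    Lp.coeFn_finsetSum (Finset.range (N + 1))
      fun n => ⟪laguerreFun n, hf.toLp f⟫_ℂ • laguerreFun n] with x hsub hfx hterm hsum
  rw [hsub, Pi.sub_apply, hfx, hsum, lagProj, Finset.sum_apply]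
  simp only [hterm]

end HalfLine

section ExpDecay

variable {b : ℂ}

lemma memLp_cexp_neg_mul (hb : 0 < b.re) :
    MemLp (fun t : ℝ => Complex.exp (-b * t)) 2 (volume.restrict (Ioi 0)) := by
  simpa using memLp_pow_mul_cexp_neg_mul hb 0

/-- The decaying exponential `t ↦ e^{-bt}` as an element of `L²((0, ∞))`. -/
noncomputable def expDecay (hb : 0 < b.re) : HalfLineL2 := (memLp_cexp_neg_mul hb).toLp

lemma norm_sq_expDecay (hb : 0 < b.re) : ‖expDecay hb‖ ^ 2 = 1 / (2 * b.re) := by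
  have hinner : ⟪expDecay hb, expDecay hb⟫_ℂ = ((1 / (2 * b.re) : ℝ) : ℂ) := by
    refine (inner_toLp_toLp (memLp_cexp_neg_mul hb) (memLp_cexp_neg_mul hb)).trans ?_
    have hre : 0 < (2 * b.re : ℂ).re := by simpa using hb
    have hexp (t : ℝ) : Complex.exp (-b * t) * (starRingEnd ℂ) (Complex.exp (-b * t)) =
        (t : ℂ) ^ 0 * Complex.exp (-(2 * b.re) * t) := by
      rw [← Complex.exp_conj, ← Complex.exp_add, pow_zero, one_mul, Complex.add_conj]
      simp [mul_assoc]
    simp only [hexp]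
    rw [integral_pow_mul_cexp_neg_mul hre]
    simp
  rw [@norm_sq_eq_re_inner ℂ, hinner, RCLike.re_eq_complex_re, Complex.ofReal_re]

lemma norm_sq_inner_laguerreFun_expDecay (hb : 0 < b.re) (n : ℕ) :
    ‖⟪laguerreFun n, expDecay hb⟫_ℂ‖ ^ 2 =
      2 / ‖b + 1‖ ^ 2 * (‖(b - 1) / (b + 1)‖ ^ 2) ^ n := by
  have hinner : ⟪laguerreFun n, expDecay hb⟫_ℂ =
      (√2 : ℝ) * ((b - 1) ^ n / (b + 1) ^ (n + 1)) :=
    (inner_laguerreFun_toLp (memLp_cexp_neg_mul hb) n).trans <| by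
      rw [integral_cexp_neg_mul_lagPhi hb]
  rw [hinner, norm_mul, Complex.norm_real, Real.norm_of_nonneg (Real.sqrt_nonneg 2), mul_pow,
    Real.sq_sqrt zero_le_two, norm_div, norm_div, norm_pow, norm_pow]
  ring

lemma add_one_ne_zero_of_re_pos (hb : 0 < b.re) : b + 1 ≠ 0 := by
  intro h
  have hre := congrArg Complex.re h
  rw [Complex.add_re, Complex.one_re, Complex.zero_re] at hre
  linarith

lemma one_sub_norm_sq_sub_one_div_add_one (hb : 0 < b.re) :
    1 - ‖(b - 1) / (b + 1)‖ ^ 2 = 4 * b.re / ‖b + 1‖ ^ 2 := by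
  have hnorm : ‖b + 1‖ ^ 2 ≠ 0 := by simpa using add_one_ne_zero_of_re_pos hb
  rw [norm_div, div_pow, eq_div_iff hnorm, sub_mul, div_mul_cancel₀ _ hnorm, Complex.sq_norm,
    Complex.sq_norm, Complex.normSq_apply, Complex.normSq_apply]
  simp only [Complex.add_re, Complex.one_re, Complex.add_im, Complex.one_im, Complex.sub_re,
    Complex.sub_im]
  ring

lemma norm_sub_one_div_add_one_lt_one (hb : 0 < b.re) : ‖(b - 1) / (b + 1)‖ < 1 := by
  have hpos : 0 < 4 * b.re / ‖b + 1‖ ^ 2 := by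
    have := norm_pos_iff.2 (add_one_ne_zero_of_re_pos hb)
    positivity
  rw [← one_sub_norm_sq_sub_one_div_add_one hb] at hpos
  exact (sq_lt_one_iff₀ (norm_nonneg _)).1 (sub_pos.1 hpos)

lemma norm_sq_laguerreResidual_expDecay (hb : 0 < b.re) (M : ℕ) :
    ‖laguerreResidual M (expDecay hb)‖ ^ 2 = ‖(b - 1) / (b + 1)‖ ^ (2 * M) / (2 * b.re) := by
  have hgeom := mul_neg_geom_sum (‖(b - 1) / (b + 1)‖ ^ 2) M
  rw [one_sub_norm_sq_sub_one_div_add_one hb, ← pow_mul] at hgeom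
  rw [norm_sq_fourierResidual orthonormal_laguerreFun, norm_sq_expDecay hb]
  simp only [norm_sq_inner_laguerreFun_expDecay hb]
  have hre : 2 * b.re ≠ 0 := by positivity
  rw [← Finset.mul_sum, eq_div_iff hre, sub_mul, div_mul_cancel₀ _ hre]
  linear_combination -hgeom

end ExpDecay

section Contour

variable {μ : ℂ}

/-- The density of the Laplace representation `∫_γ e^{-(μ²/2 + ξ) (z - 1)} e^{-ξ} dz` of the
resolvent `(μ²/2 + ξ)⁻¹ e^{-ξ}` along the contour `z = coth (r μ / 2)`, `0 < r < ∞`. -/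
noncomputable def contourWeight (μ : ℂ) (r : ℝ) : ℂ :=
  -(μ * deriv cothHalf (r * μ)) * Complex.exp (μ ^ 2 / 2 * (1 - cothHalf (r * μ)))

/-- The constant in front of the inverse Gaussian majorant of `contourWeight`. -/
noncomputable def contourConst (μ : ℂ) : ℝ :=
  √2 * ‖μ‖ * Real.exp (‖μ‖ ^ 2 * (‖μ‖ / μ.re + 1)) / (μ.re * √μ.re)

lemma contourConst_nonneg (hμ : 0 < μ.re) : 0 ≤ contourConst μ := by
  unfold contourConst
  positivity

/-- The primitive of `contourWeight μ r * e^{-cothHalf (r μ) ξ}` in the contour parameter `r`. -/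
noncomputable def contourPrimitive (μ : ℂ) (ξ r : ℝ) : ℂ :=
  (μ ^ 2 / 2 + ξ)⁻¹ *
    (Complex.exp (μ ^ 2 / 2 * (1 - cothHalf (r * μ))) * Complex.exp (-cothHalf (r * μ) * ξ))

section Pointwise

variable (hμ : 0 < μ.re) {r : ℝ} (hr : 0 < r)
include hμ hr

lemma re_ofReal_mul_pos : 0 < (r * μ).re := by
  rw [Complex.re_ofReal_mul]
  exact mul_pos hr hμ

lemma norm_cexp_mul_one_sub_cothHalf_le :
    ‖Complex.exp (μ ^ 2 / 2 * (1 - cothHalf (r * μ)))‖ ≤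
      Real.exp (‖μ‖ ^ 2 * (‖μ‖ / μ.re + 1)) * Real.exp (-(μ.re / r)) := by
  have hμ₀ : μ ≠ 0 := by rintro rfl; simp at hμ
  have hsplit : μ ^ 2 / 2 * (1 - cothHalf (r * μ)) =
      -(μ ^ 2 * ((Complex.exp (r * μ) - 1)⁻¹ - (r * μ)⁻¹)) + ((-r⁻¹ : ℝ) : ℂ) * μ := by
    rw [cothHalf]
    push_cast
    field_simp
    ring
  have hpole : ‖(Complex.exp (r * μ) - 1)⁻¹ - (r * μ)⁻¹‖ ≤ ‖μ‖ / μ.re + 1 := by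
    refine (norm_inv_cexp_sub_one_sub_inv_le (re_ofReal_mul_pos hμ hr)).trans_eq ?_
    rw [Complex.re_ofReal_mul, norm_mul, Complex.norm_real, Real.norm_of_nonneg hr.le,
      mul_div_mul_left _ _ hr.ne']
  rw [Complex.norm_exp, ← Real.exp_add, hsplit, Complex.add_re, Complex.re_ofReal_mul]
  refine Real.exp_le_exp.2 (add_le_add ?_ (by rw [div_eq_inv_mul, neg_mul]))
  refine (Complex.re_le_norm _).trans ?_
  rw [norm_neg, norm_mul, norm_pow]
  gcongr

lemma norm_contourWeight_le :
    ‖contourWeight μ r‖ ≤ √(2 * (cothHalf (r * μ)).re) *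
      (contourConst μ * ((r * √r)⁻¹ * Real.exp (-(μ.re / r + μ.re / 4 * r)))) := by
  have hderiv := norm_deriv_cothHalf_le (re_ofReal_mul_pos hμ hr)
  rw [Complex.re_ofReal_mul] at hderiv
  rw [contourWeight, norm_mul, norm_neg, norm_mul]
  calc ‖μ‖ * ‖deriv cothHalf (r * μ)‖ * ‖Complex.exp (μ ^ 2 / 2 * (1 - cothHalf (r * μ)))‖
      ≤ ‖μ‖ * (√(2 * (cothHalf (r * μ)).re) *
          (√2 * Real.exp (-(r * μ.re / 4)) / (r * μ.re * √(r * μ.re)))) *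
          (Real.exp (‖μ‖ ^ 2 * (‖μ‖ / μ.re + 1)) * Real.exp (-(μ.re / r))) := by
        gcongr
        exact norm_cexp_mul_one_sub_cothHalf_le hμ hr
    _ = _ := by
        rw [contourConst, Real.sqrt_mul hr.le, show -(μ.re / r + μ.re / 4 * r) =
          -(r * μ.re / 4) + -(μ.re / r) by ring, Real.exp_add]
        field_simp

lemma norm_smul_laguerreResidual_expDecay_le (M : ℕ) :
    ‖contourWeight μ r‖ *
        ‖laguerreResidual M (expDecay (re_cothHalf_pos (re_ofReal_mul_pos hμ hr)))‖ ≤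
      contourConst μ * ((r * √r)⁻¹ * Real.exp (-(μ.re / r + μ.re * (M + 1 / 4) * r))) := by
  have hs := re_ofReal_mul_pos hμ hr
  have hre := re_cothHalf_pos hs
  have hres : ‖laguerreResidual M (expDecay hre)‖ =
      Real.exp (-(r * μ.re)) ^ M / √(2 * (cothHalf (r * μ)).re) := by
    rw [← Real.sqrt_sq (norm_nonneg (laguerreResidual M _)), norm_sq_laguerreResidual_expDecay,
      cothHalf_sub_one_div_add_one hs, Complex.norm_exp, Complex.neg_re, Complex.re_ofReal_mul,
      Real.sqrt_div (by positivity), mul_comm 2 M, pow_mul, Real.sqrt_sq (by positivity)]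
  have : 0 < √(2 * (cothHalf (r * μ)).re) := by positivity
  rw [hres]
  refine (mul_le_mul_of_nonneg_right (norm_contourWeight_le hμ hr) (by positivity)).trans_eq ?_
  rw [← Real.exp_nat_mul, show -(μ.re / r + μ.re * (M + 1 / 4) * r) =
    -(μ.re / r + μ.re / 4 * r) + M * -(r * μ.re) by ring, Real.exp_add]
  field_simp

lemma exists_coeFn_eq_and_norm_laguerreResidual_le :
    ∃ F : HalfLineL2,
      F =ᵐ[volume.restrict (Ioi 0)]
        (fun ξ : ℝ => contourWeight μ r * Complex.exp (-cothHalf (r * μ) * ξ)) ∧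
      ∀ M : ℕ, ‖laguerreResidual M F‖ ≤
        contourConst μ * ((r * √r)⁻¹ * Real.exp (-(μ.re / r + μ.re * (M + 1 / 4) * r))) := by
  have hre := re_cothHalf_pos (re_ofReal_mul_pos hμ hr)
  refine ⟨contourWeight μ r • expDecay hre, ?_, fun M => ?_⟩
  · filter_upwards [Lp.coeFn_smul (contourWeight μ r) (expDecay hre),
      (memLp_cexp_neg_mul hre).coeFn_toLp] with ξ hsmul hξ
    rw [hsmul, Pi.smul_apply, expDecay, hξ, smul_eq_mul]
  · rw [map_smul, norm_smul]
    exact norm_smul_laguerreResidual_expDecay_le hμ hr M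

lemma norm_contourWeight_mul_cexp_le {ξ : ℝ} (hξ : 0 < ξ) :
    ‖contourWeight μ r * Complex.exp (-cothHalf (r * μ) * ξ)‖ ≤
      contourConst μ / √ξ * ((r * √r)⁻¹ * Real.exp (-(μ.re / r + μ.re / 4 * r))) := by
  set y := (cothHalf (r * μ)).re
  have hy : 0 < y := re_cothHalf_pos (re_ofReal_mul_pos hμ hr)
  have hdecay : √(2 * y) * Real.exp (-y * ξ) ≤ 1 / √ξ := by
    rw [le_div_iff₀ (by positivity), ← sq_le_one_iff₀ (by positivity)]
    calc (√(2 * y) * Real.exp (-y * ξ) * √ξ) ^ 2 = 2 * y * ξ * Real.exp (-(2 * y * ξ)) := by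
          rw [mul_pow, mul_pow, Real.sq_sqrt (by positivity), Real.sq_sqrt hξ.le,
            ← Real.exp_nat_mul]
          ring_nf
      _ ≤ Real.exp (2 * y * ξ) * Real.exp (-(2 * y * ξ)) := by
          gcongr
          linarith [Real.add_one_le_exp (2 * y * ξ)]
      _ = 1 := by rw [← Real.exp_add, add_neg_cancel, Real.exp_zero]
  rw [norm_mul, Complex.norm_exp, Complex.re_mul_ofReal, Complex.neg_re]
  calc ‖contourWeight μ r‖ * Real.exp (-y * ξ)
      ≤ √(2 * y) * (contourConst μ * ((r * √r)⁻¹ * Real.exp (-(μ.re / r + μ.re / 4 * r)))) *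
          Real.exp (-y * ξ) := by
        gcongr
        exact norm_contourWeight_le hμ hr
    _ = √(2 * y) * Real.exp (-y * ξ) *
          (contourConst μ * ((r * √r)⁻¹ * Real.exp (-(μ.re / r + μ.re / 4 * r)))) := by ring
    _ ≤ 1 / √ξ * (contourConst μ * ((r * √r)⁻¹ * Real.exp (-(μ.re / r + μ.re / 4 * r)))) := by
        have hconst := contourConst_nonneg hμ
        gcongr
    _ = _ := by ring

lemma hasDerivAt_contourPrimitive {ξ : ℝ} (hξ : μ ^ 2 / 2 + ξ ≠ 0) :
    HasDerivAt (contourPrimitive μ ξ)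
      (contourWeight μ r * Complex.exp (-cothHalf (r * μ) * ξ)) r := by
  have hcoth : HasDerivAt (fun r : ℝ => cothHalf (r * μ)) (deriv cothHalf (r * μ) * μ) r := by
    have hlin : HasDerivAt (fun z : ℂ => z * μ) μ r := by
      simpa using (hasDerivAt_id (r : ℂ)).mul_const μ
    exact ((hasDerivAt_cothHalf (re_ofReal_mul_pos hμ hr)).differentiableAt.hasDerivAt.comp
      (r : ℂ) hlin).comp_ofReal
  refine ((((hcoth.const_sub 1).const_mul (μ ^ 2 / 2)).cexp.mul
    (hcoth.fun_neg.mul_const (ξ : ℂ)).cexp).const_mul (μ ^ 2 / 2 + ξ : ℂ)⁻¹).congr_deriv ?_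
  rw [contourWeight]
  linear_combination -(μ * deriv cothHalf (r * μ)) *
    Complex.exp (μ ^ 2 / 2 * (1 - cothHalf (r * μ))) * Complex.exp (-cothHalf (r * μ) * ξ) *
      inv_mul_cancel₀ hξ

lemma norm_contourPrimitive_le {ξ : ℝ} (hξ : 0 ≤ ξ) :
    ‖contourPrimitive μ ξ r‖ ≤ ‖(μ ^ 2 / 2 + ξ : ℂ)⁻¹‖ *
      (Real.exp (‖μ‖ ^ 2 * (‖μ‖ / μ.re + 1)) * Real.exp (-(μ.re / r))) := by
  have hdecay : ‖Complex.exp (-cothHalf (r * μ) * ξ)‖ ≤ 1 := by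
    rw [Complex.norm_exp, Real.exp_le_one_iff, Complex.re_mul_ofReal, Complex.neg_re]
    have := re_cothHalf_pos (re_ofReal_mul_pos hμ hr)
    exact mul_nonpos_of_nonpos_of_nonneg (neg_nonpos.2 this.le) hξ
  rw [contourPrimitive, norm_mul, norm_mul]
  refine mul_le_mul_of_nonneg_left ?_ (norm_nonneg _)
  exact (mul_le_of_le_one_right (norm_nonneg _) hdecay).trans
    (norm_cexp_mul_one_sub_cothHalf_le hμ hr)

end Pointwise

lemma tendsto_contourPrimitive_nhdsGT (hμ : 0 < μ.re) {ξ : ℝ} (hξ : 0 ≤ ξ) :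
    Tendsto (contourPrimitive μ ξ) (𝓝[>] 0) (𝓝 0) := by
  have hexp : Tendsto (fun r : ℝ => Real.exp (-(μ.re / r))) (𝓝[>] 0) (𝓝 0) :=
    Real.tendsto_exp_neg_atTop_nhds_zero.comp (tendsto_inv_nhdsGT_zero.const_mul_atTop hμ)
  have hbound := (hexp.const_mul (Real.exp (‖μ‖ ^ 2 * (‖μ‖ / μ.re + 1)))).const_mul
    ‖(μ ^ 2 / 2 + ξ : ℂ)⁻¹‖
  rw [mul_zero, mul_zero] at hbound
  refine squeeze_zero_norm' ?_ hbound
  filter_upwards [self_mem_nhdsWithin] with r hr using norm_contourPrimitive_le hμ hr hξ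

lemma tendsto_cothHalf_ofReal_mul_atTop (hμ : 0 < μ.re) :
    Tendsto (fun r : ℝ => cothHalf (r * μ)) atTop (𝓝 1) := by
  have hden : Tendsto (fun r : ℝ => Complex.exp (r * μ) - 1) atTop (Bornology.cobounded ℂ) := by
    rw [← tendsto_norm_atTop_iff_cobounded]
    refine tendsto_atTop_mono (fun r => ?_) (tendsto_id.atTop_mul_const hμ)
    simpa using re_le_norm_cexp_sub_one (r * μ)
  simpa [cothHalf, div_eq_mul_inv] using
    ((tendsto_inv₀_cobounded.comp hden).const_mul (2 : ℂ)).const_add 1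

lemma tendsto_contourPrimitive_atTop (hμ : 0 < μ.re) (ξ : ℝ) :
    Tendsto (contourPrimitive μ ξ) atTop (𝓝 ((μ ^ 2 / 2 + ξ)⁻¹ * Complex.exp (-ξ))) := by
  have hcoth := tendsto_cothHalf_ofReal_mul_atTop hμ
  have h := (((hcoth.const_sub 1).const_mul (μ ^ 2 / 2)).cexp.mul
    (hcoth.neg.mul_const (ξ : ℂ)).cexp).const_mul (μ ^ 2 / 2 + ξ : ℂ)⁻¹
  rwa [sub_self, mul_zero, Complex.exp_zero, one_mul, neg_one_mul] at h

@[fun_prop]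
lemma measurable_cothHalf : Measurable cothHalf := by
  unfold cothHalf
  fun_prop

lemma measurable_contourWeight_mul_cexp (μ : ℂ) :
    Measurable fun z : ℝ × ℝ =>
      contourWeight μ z.1 * Complex.exp (-cothHalf (z.1 * μ) * z.2) := by
  have := measurable_deriv cothHalf
  unfold contourWeight
  fun_prop

lemma integrableOn_contourWeight_mul_cexp (hμ : 0 < μ.re) {ξ : ℝ} (hξ : 0 < ξ) :
    IntegrableOn (fun r : ℝ => contourWeight μ r * Complex.exp (-cothHalf (r * μ) * ξ))
      (Ioi 0) := by
  refine ((integrableOn_invGaussian hμ (by positivity : 0 < μ.re / 4)).const_mul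
    (contourConst μ / √ξ)).mono' ?_ ?_
  · exact ((measurable_contourWeight_mul_cexp μ).comp measurable_prodMk_right).aestronglyMeasurable
  · filter_upwards [self_mem_ae_restrict measurableSet_Ioi] with r hr
      using norm_contourWeight_mul_cexp_le hμ hr hξ

lemma integral_contourWeight_mul_cexp (hμ : 0 < μ.re) {ξ : ℝ} (hξ : 0 < ξ)
    (hne : μ ^ 2 / 2 + ξ ≠ 0) :
    ∫ r in Ioi (0 : ℝ), contourWeight μ r * Complex.exp (-cothHalf (r * μ) * ξ) =
      (μ ^ 2 / 2 + ξ)⁻¹ * Complex.exp (-ξ) := by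
  rw [integral_Ioi_of_hasDerivAt_of_tendsto_nhdsGT
    (fun r hr => hasDerivAt_contourPrimitive hμ hr hne) (integrableOn_contourWeight_mul_cexp hμ hξ)
    (tendsto_contourPrimitive_nhdsGT hμ hξ.le) (tendsto_contourPrimitive_atTop hμ ξ), sub_zero]

lemma sq_div_two_add_ofReal_ne_zero (hμ : 0 < μ.re) {ξ : ℝ} (hξ : 0 ≤ ξ) :
    μ ^ 2 / 2 + ξ ≠ 0 := by
  intro h
  have him : μ.re * μ.im = 0 := by
    have := congrArg Complex.im h
    simp only [pow_two, Complex.add_im, Complex.div_ofNat_im, Complex.mul_im, Complex.ofReal_im,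
      Complex.zero_im] at this
    linarith
  have hre := congrArg Complex.re h
  simp only [pow_two, Complex.add_re, Complex.div_ofNat_re, Complex.mul_re, Complex.ofReal_re,
    Complex.zero_re, (mul_eq_zero.1 him).resolve_left hμ.ne'] at hre
  nlinarith

lemma norm_laguerreResidual_le (hμ : 0 < μ.re) {f : HalfLineL2}
    (hf : f =ᵐ[volume.restrict (Ioi 0)] fun ξ : ℝ => (μ ^ 2 / 2 + ξ)⁻¹ * Complex.exp (-ξ))
    (M : ℕ) :
    ‖laguerreResidual M f‖ ≤
      contourConst μ * √(Real.pi / μ.re) * Real.exp (-(2 * (√M * μ.re))) := by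
  have hmeas : AEStronglyMeasurable
      (fun r ξ : ℝ => contourWeight μ r * Complex.exp (-cothHalf (r * μ) * ξ)).uncurry
      ((volume.restrict (Ioi 0)).prod (volume.restrict (Ioi 0))) :=
    (measurable_contourWeight_mul_cexp μ).aestronglyMeasurable
  have hrate (m : ℕ) : 0 < μ.re * (m + 1 / 4) := by positivity
  have hintegrable (m : ℕ) := (integrableOn_invGaussian hμ (hrate m)).const_mul (contourConst μ)
  refine (norm_map_le_integral_of_ae_eq_integral (laguerreResidual M) hmeas
    (hintegrable 0) (hintegrable M) ?_ ?_ ?_).trans ?_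
  · filter_upwards [self_mem_ae_restrict measurableSet_Ioi] with r hr
    obtain ⟨F, hF, hle⟩ := exists_coeFn_eq_and_norm_laguerreResidual_le hμ hr
    exact ⟨F, hF, by simpa [fourierResidual_apply] using hle 0, hle M⟩
  · filter_upwards [self_mem_ae_restrict measurableSet_Ioi] with ξ hξ
      using integrableOn_contourWeight_mul_cexp hμ hξ
  · filter_upwards [hf, self_mem_ae_restrict measurableSet_Ioi] with ξ hfξ hξ
    rw [hfξ, integral_contourWeight_mul_cexp hμ hξ (sq_div_two_add_ofReal_ne_zero hμ (le_of_lt hξ))]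
  · rw [integral_const_mul, integral_invGaussian hμ (hrate M), ← mul_assoc]
    have hsqrt : √M * μ.re ≤ √(μ.re * (μ.re * (M + 1 / 4))) := by
      refine Real.le_sqrt_of_sq_le ?_
      rw [mul_pow, Real.sq_sqrt (Nat.cast_nonneg M)]
      nlinarith [sq_nonneg μ.re]
    have hconst := contourConst_nonneg hμ
    gcongr

end Contour

section Resolvent

lemma degree_divByMonic_X_sub_C_lt {R : Type*} [CommRing R] [Nontrivial R] {p : R[X]} {M : ℕ}
    (hp : p.degree ≤ M) (c : R) : (p /ₘ (X - C c)).degree < M := by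
  rcases eq_or_ne p 0 with rfl | hp₀
  · rw [zero_divByMonic, degree_zero]
    exact WithBot.bot_lt_coe M
  · refine (degree_divByMonic_lt p _ hp₀ ?_).trans_le hp
    rw [degree_X_sub_C]
    exact zero_lt_one

lemma inv_add_mul_eval {K : Type*} [Field K] (p : K[X]) {a x : K} (hax : a + x ≠ 0) :
    (a + x)⁻¹ * p.eval x = (p /ₘ (X - C (-a))).eval x + p.eval (-a) * (a + x)⁻¹ := by
  have hdiv := congrArg (eval x) (modByMonic_add_div p (X - C (-a)))
  simp only [modByMonic_X_sub_C_eq_C_eval, eval_add, eval_mul, eval_sub, eval_X, eval_C,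
    sub_neg_eq_add] at hdiv
  field_simp
  linear_combination -hdiv

variable {a : ℂ} (ha : a ∈ Complex.slitPlane)
include ha

lemma exists_pos_le_norm_add_ofReal : ∃ δ > 0, ∀ x : ℝ, 0 ≤ x → δ ≤ ‖a + x‖ := by
  obtain ⟨δ, hδ, hball⟩ := Metric.isOpen_iff.1 Complex.isOpen_slitPlane a ha
  refine ⟨δ, hδ, fun x hx => ?_⟩
  by_contra! hlt
  have hmem : (-x : ℂ) ∈ Metric.ball a δ := by
    rwa [Metric.mem_ball, dist_comm, dist_eq_norm, sub_neg_eq_add]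
  exact hx.not_gt (Complex.neg_ofReal_mem_slitPlane.1 (hball hmem))

lemma memLp_inv_add_ofReal_mul {f : ℝ → ℂ} (hf : MemLp f 2 (volume.restrict (Ioi 0))) :
    MemLp (fun x : ℝ => (a + x)⁻¹ * f x) 2 (volume.restrict (Ioi 0)) := by
  obtain ⟨δ, hδ, hle⟩ := exists_pos_le_norm_add_ofReal ha
  have hmeas : Measurable fun x : ℝ => (a + x)⁻¹ := by fun_prop
  refine hf.of_le_mul (c := δ⁻¹) (hmeas.aestronglyMeasurable.mul hf.1) ?_
  filter_upwards [self_mem_ae_restrict measurableSet_Ioi] with x hx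
  rw [norm_mul, norm_inv]
  gcongr
  exact hle x (le_of_lt hx)

/-- The function `x ↦ (a + x)⁻¹ e^{-x}` as an element of `L²((0, ∞))`. -/
noncomputable def expResolvent : HalfLineL2 :=
  (memLp_inv_add_ofReal_mul ha (memLp_cexp_neg_mul (b := 1) one_pos)).toLp

lemma coeFn_expResolvent :
    expResolvent ha =ᵐ[volume.restrict (Ioi 0)] fun x : ℝ => (a + x)⁻¹ * Complex.exp (-x) := by
  filter_upwards [(memLp_inv_add_ofReal_mul ha
    (memLp_cexp_neg_mul (b := 1) one_pos)).coeFn_toLp] with x hx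
  rw [expResolvent, hx, neg_one_mul]

lemma laguerreResidual_inv_add_mul_eval {p : ℂ[X]} {M : ℕ} (hp : p.degree ≤ M) :
    laguerreResidual M
        (memLp_inv_add_ofReal_mul ha (memLp_eval_mul_cexp_neg p)).toLp =
      p.eval (-a) • laguerreResidual M (expResolvent ha) := by
  have hsplit : (memLp_inv_add_ofReal_mul ha (memLp_eval_mul_cexp_neg p)).toLp =
      expPoly (p /ₘ (X - C (-a))) + p.eval (-a) • expResolvent ha := by
    refine Lp.ext ?_
    obtain ⟨δ, hδ, hle⟩ := exists_pos_le_norm_add_ofReal ha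
    filter_upwards [(memLp_inv_add_ofReal_mul ha (memLp_eval_mul_cexp_neg p)).coeFn_toLp,
      Lp.coeFn_add (expPoly (p /ₘ (X - C (-a)))) (p.eval (-a) • expResolvent ha),
      Lp.coeFn_smul (p.eval (-a)) (expResolvent ha), coeFn_expPoly (p /ₘ (X - C (-a))),
      coeFn_expResolvent ha, ae_restrict_mem measurableSet_Ioi]
      with x htoLp hadd hsmul hpoly hres hx
    have hax : a + x ≠ 0 := norm_pos_iff.1 (hδ.trans_le (hle x (le_of_lt hx)))
    rw [htoLp, hadd, Pi.add_apply, hsmul, Pi.smul_apply, hpoly, hres, smul_eq_mul, ← mul_assoc,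
      inv_add_mul_eval p hax, add_mul, mul_assoc]
  rw [hsplit, map_add, laguerreResidual_expPoly (degree_divByMonic_X_sub_C_lt hp (-a)), zero_add,
    map_smul]

end Resolvent

section ProjectedExpDecay

/-- The polynomial `∑_{n ≤ N} 2 (b - 1)ⁿ / (b + 1)ⁿ⁺¹ L_n(2X)`, whose product with `e^{-x}` is
`Π_N e^{-b·}`. -/
noncomputable def expDecayProjPoly (b : ℂ) (N : ℕ) : ℂ[X] :=
  ∑ n ∈ Finset.range (N + 1), C (2 * ((b - 1) ^ n / (b + 1) ^ (n + 1))) * laguerrePoly n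

lemma degree_expDecayProjPoly_le (b : ℂ) (N : ℕ) : (expDecayProjPoly b N).degree ≤ N := by
  refine (degree_sum_le _ _).trans (Finset.sup_le fun n hn => ?_)
  rw [← smul_eq_C_mul]
  refine (degree_smul_le _ _).trans ?_
  rw [degree_laguerrePoly]
  exact_mod_cast Finset.mem_range_succ_iff.1 hn

lemma norm_eval_laguerrePoly_le (n : ℕ) (z : ℂ) {δ : ℝ} (hδ : 0 < δ) :
    ‖(laguerrePoly n).eval z‖ ≤ Real.exp (2 * ‖z‖ / δ) * (1 + δ) ^ n := by
  rw [eval_laguerrePoly, add_comm 1 δ, add_pow, Finset.mul_sum]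
  refine (norm_sum_le _ _).trans (Finset.sum_le_sum fun k _ => ?_)
  calc ‖(n.choose k : ℂ) * (-2) ^ k / k.factorial * z ^ k‖
      = (2 * ‖z‖ / δ) ^ k / k.factorial * (δ ^ k * n.choose k) := by
        simp only [norm_mul, norm_div, norm_pow, norm_neg, Complex.norm_ofNat, Complex.norm_natCast]
        rw [div_pow, mul_pow]
        field_simp
    _ ≤ Real.exp (2 * ‖z‖ / δ) * (δ ^ k * n.choose k) := by
        gcongr
        exact Real.pow_div_factorial_le_exp _ (by positivity) k
    _ = _ := by rw [one_pow, mul_one]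

variable {b : ℂ} (hb : 0 < b.re)
include hb

lemma lagProj_cexp_neg_mul (N : ℕ) (x : ℝ) :
    lagProj N (fun t => Complex.exp (-b * t)) x =
      (expDecayProjPoly b N).eval (x : ℂ) * Complex.exp (-x) := by
  simp only [lagProj, integral_cexp_neg_mul_lagPhi hb]
  simp only [expDecayProjPoly, ofReal_lagPhi, eval_finsetSum, eval_mul, eval_C, Finset.sum_mul,
    mul_assoc]

lemma exists_forall_norm_eval_expDecayProjPoly_le (z : ℂ) :
    ∃ K : ℝ, ∀ N : ℕ, ‖(expDecayProjPoly b N).eval z‖ ≤ K := by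
  set q := ‖(b - 1) / (b + 1)‖
  have hq : q < 1 := norm_sub_one_div_add_one_lt_one hb
  set ρ := (1 + (1 - q)) * q
  have hρ₀ : 0 ≤ ρ := mul_nonneg (by linarith) (norm_nonneg _)
  have hρ : ρ < 1 := by nlinarith [mul_pos (sub_pos.2 hq) (sub_pos.2 hq)]
  set c := 2 / ‖b + 1‖ * Real.exp (2 * ‖z‖ / (1 - q))
  have hterm (n : ℕ) :
      ‖(C (2 * ((b - 1) ^ n / (b + 1) ^ (n + 1))) * laguerrePoly n).eval z‖ ≤ c * ρ ^ n := by
    have hcoeff : ‖2 * ((b - 1) ^ n / (b + 1) ^ (n + 1))‖ = 2 / ‖b + 1‖ * q ^ n := by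
      rw [norm_mul, norm_div, norm_pow, norm_pow, Complex.norm_ofNat, pow_succ', mul_div_assoc',
        mul_div_mul_comm, ← div_pow, ← norm_div]
    rw [eval_mul, eval_C, norm_mul, hcoeff, mul_pow]
    calc 2 / ‖b + 1‖ * q ^ n * ‖(laguerrePoly n).eval z‖
        ≤ 2 / ‖b + 1‖ * q ^ n * (Real.exp (2 * ‖z‖ / (1 - q)) * (1 + (1 - q)) ^ n) := by
          gcongr
          exact norm_eval_laguerrePoly_le n z (sub_pos.2 hq)
      _ = c * ((1 + (1 - q)) ^ n * q ^ n) := by ring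
  refine ⟨∑' n, c * ρ ^ n, fun N => ?_⟩
  rw [expDecayProjPoly, eval_finsetSum]
  calc ‖∑ n ∈ Finset.range (N + 1),
        (C (2 * ((b - 1) ^ n / (b + 1) ^ (n + 1))) * laguerrePoly n).eval z‖
      ≤ ∑ n ∈ Finset.range (N + 1), c * ρ ^ n := norm_sum_le_of_le _ fun n _ => hterm n
    _ ≤ ∑' n, c * ρ ^ n :=
        ((summable_geometric_of_lt_one hρ₀ hρ).mul_left c).sum_le_tsum _ fun n _ => by positivity

lemma lagEps_eq {a : ℂ} (ha : a ∈ Complex.slitPlane) (N : ℕ) :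
    lagEps N a b = ENNReal.ofReal
      (‖(expDecayProjPoly b N).eval (-a)‖ * ‖laguerreResidual (N + 1) (expResolvent ha)‖) := by
  rw [lagEps, ← norm_smul, ← laguerreResidual_inv_add_mul_eval ha
    ((degree_expDecayProjPoly_le b N).trans (by exact_mod_cast N.le_succ)), Lp.norm_def,
    ENNReal.ofReal_toReal (Lp.eLpNorm_ne_top _), eLpNorm_congr_ae (coeFn_laguerreResidual_toLp _ N)]
  simp only [lagProj_cexp_neg_mul hb]

end ProjectedExpDecay

section SquareRoot

variable {z : ℂ}

lemma exists_sq_eq_and_re_pos (hz : z ∈ Complex.slitPlane) : ∃ μ : ℂ, μ ^ 2 = z ∧ 0 < μ.re := by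
  refine ⟨z ^ (2⁻¹ : ℂ), Complex.cpow_ofNat_inv_pow z 2, ?_⟩
  rw [Complex.cpow_inv_two_re]
  have : -z.re < ‖z‖ := by
    rcases Complex.mem_slitPlane_iff.1 hz with hre | him
    · linarith [norm_nonneg z]
    · exact (neg_le_abs z.re).trans_lt (Complex.abs_re_lt_norm.2 him)
  exact Real.sqrt_pos.2 (by linarith)

lemma re_cpow_half_sq_mul_ofReal {μ : ℂ} (hμ : 0 < μ.re) {x : ℝ} (hx : 0 < x) :
    ((μ ^ 2 * x) ^ (1 / 2 : ℂ)).re = √x * μ.re := by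
  have hsq : μ ^ 2 * x = (√x * μ) ^ 2 := by
    rw [mul_pow, ← Complex.ofReal_pow, Real.sq_sqrt hx.le, mul_comm]
  have hre : 0 < (√x * μ).re := re_ofReal_mul_pos hμ (Real.sqrt_pos.2 hx)
  rw [hsq, one_div, Complex.sq_cpow_two_inv hre, Complex.re_ofReal_mul]

end SquareRoot

theorem lagEps_bound (a : ℂ) (ha : ∀ x : ℝ, x ≤ 0 → a ≠ (x : ℂ)) (b : ℂ) (hb : 0 < b.re) :
    ∃ C > (0:ℝ), ∀ N : ℕ,
      lagEps N a b
        ≤ ENNReal.ofReal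
            (C * Real.exp (-2 * ((2 * a * ((N : ℂ) + 1)) ^ ((1:ℂ)/2)).re)) := by
  have ha' : a ∈ Complex.slitPlane := Complex.mem_slitPlane_iff_not_le_zero.2 fun h =>
    ha a.re (Complex.le_def.1 h).1 (Complex.ext rfl (Complex.le_def.1 h).2)
  have h2a : 2 * a ∈ Complex.slitPlane := by
    simpa [Complex.mem_slitPlane_iff] using ha'
  obtain ⟨μ, hμa, hμ⟩ := exists_sq_eq_and_re_pos h2a
  obtain ⟨K, hK⟩ := exists_forall_norm_eval_expDecayProjPoly_le hb (-a)
  have hres (N : ℕ) := norm_laguerreResidual_le hμ (f := expResolvent ha')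
    (by simpa [hμa] using coeFn_expResolvent ha') (N + 1)
  set R := contourConst μ * √(Real.pi / μ.re)
  refine ⟨|K * R| + 1, by positivity, fun N => ?_⟩
  have hroot := re_cpow_half_sq_mul_ofReal hμ (x := N + 1) N.cast_add_one_pos
  push_cast at hroot hres
  rw [lagEps_eq hb ha', ← hμa, hroot, neg_mul]
  refine ENNReal.ofReal_le_ofReal ?_
  calc _ ≤ K * (R * Real.exp (-(2 * (√(N + 1) * μ.re)))) :=
        mul_le_mul (hK N) (hres N) (norm_nonneg _) ((norm_nonneg _).trans (hK N))
    _ ≤ (|K * R| + 1) * Real.exp (-(2 * (√(N + 1) * μ.re))) := by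
        rw [← mul_assoc]
        gcongr
        linarith [le_abs_self (K * R)]
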